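/- arXiv:2403.08843 — 2 statements merged into one kernel-verified Lean document; each statement's English description precedes it below -/
import Mathlib

section
/- Let ⋄ : ℝ × ℝ → ℝ be a continuous binary operation (in particular ⋄ ∈ {+, −, ·}), and let 𝗑, 𝗒 : ℝ → [0,1] be fuzzy numbers such that for every α ∈ (0,1] the α-cuts 𝗑^(α) and 𝗒^(α) are nonempty compact sets. Then for every α ∈ (0,1], the α-cut of the Zadeh extension satisfies (𝗑 ⋄̃ 𝗒)^(α) = { x ⋄ y : x ∈ 𝗑^(α), y ∈ 𝗒^(α) }. -/
open Set

/-- Zadeh extension of a binary operation on ℝ applied to fuzzy numbers. -/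
noncomputable def zadeh2 (f : ℝ → ℝ → ℝ) (x y : ℝ → ℝ) : ℝ → ℝ :=
  fun z => sSup {m : ℝ | ∃ a b : ℝ, f a b = z ∧ m = min (x a) (y b)}

/-- α-cut of a fuzzy number. -/
def cut (x : ℝ → ℝ) (α : ℝ) : Set ℝ := {t : ℝ | α ≤ x t}

/-!
Compactness of the cuts makes the joint membership function `(a, b) ↦ min (x a) (y b)` upper
semicontinuous with compact cuts, so on each closed fibre of `f` where it is somewhere positive it
has a maximum. The supremum in the Zadeh extension is thus attained wherever it is positive, and a
point of a positive cut of the extension is the image of a maximizer.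
-/

open Function

section CompactCuts

variable {X : Type*} [TopologicalSpace X]

theorem upperSemicontinuousOn_preimage_Ici [T2Space X] {L : Type*} [LinearOrder L] {u : X → L}
    {c : L} (hu : ∀ d, c ≤ d → IsCompact (u ⁻¹' Ici d)) :
    UpperSemicontinuousOn u (u ⁻¹' Ici c) := by
  rw [upperSemicontinuousOn_iff_preimage_Ici]
  intro d
  refine ⟨u ⁻¹' Ici (max c d), (hu _ (le_max_left c d)).isClosed, ?_⟩
  rw [← Ici_inter_Ici, preimage_inter, ← inter_assoc, inter_self]

theorem exists_isMaxOn_of_isCompact_preimage_Ici [T2Space X] {L : Type*} [LinearOrder L]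
    {u : X → L} {S : Set X} {a : X} (hS : IsClosed S) (ha : a ∈ S)
    (hu : ∀ d, u a ≤ d → IsCompact (u ⁻¹' Ici d)) :
    ∃ p ∈ S, IsMaxOn u S p := by
  have hK : IsCompact (u ⁻¹' Ici (u a) ∩ S) := (hu _ le_rfl).inter_right hS
  have hK_nonempty : (u ⁻¹' Ici (u a) ∩ S).Nonempty := ⟨a, self_mem_Ici, ha⟩
  obtain ⟨p, ⟨hap, hpS⟩, hmax⟩ :=
    ((upperSemicontinuousOn_preimage_Ici hu).mono inter_subset_left).exists_isMaxOn hK_nonempty hK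
  refine ⟨p, hpS, fun q hq => ?_⟩
  rcases le_total (u a) (u q) with haq | hqa
  · exact hmax ⟨haq, hq⟩
  · exact hqa.trans hap

theorem isCompact_preimage_Ici_of_forall_le {L : Type*} [LinearOrder L] {u : X → L} {b M : L}
    (hM : ∀ t, u t ≤ M) (hu : ∀ c ∈ Ioc b M, IsCompact (u ⁻¹' Ici c)) {c : L} (hc : b < c) :
    IsCompact (u ⁻¹' Ici c) := by
  rcases le_or_gt c M with hcM | hMc
  · exact hu c ⟨hc, hcM⟩
  · have hempty : u ⁻¹' Ici c = ∅ :=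
      eq_empty_of_forall_notMem fun t ht => (hMc.trans_le ht).not_ge (hM t)
    exact hempty ▸ isCompact_empty

end CompactCuts

section ZadehExtension

variable {X Y Z : Type*}

/-- The Zadeh extension of a map `f`, evaluated at the fuzzy element `u` of its domain. An operation
of several variables is covered by taking `X` to be a product and `u` the minimum of the membership
functions of the arguments. -/
noncomputable def zadehExtension (f : X → Z) (u : X → ℝ) : Z → ℝ :=
  fun z => sSup (u '' (f ⁻¹' {z}))

theorem zadeh2_eq_zadehExtension (f : ℝ → ℝ → ℝ) (x y : ℝ → ℝ) :
    zadeh2 f x y = zadehExtension (uncurry f) fun p => min (x p.1) (y p.2) := by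
  funext z
  refine congrArg sSup (Set.ext fun m => ?_)
  simp only [mem_ofPred_eq, mem_image, mem_preimage, mem_singleton_iff, Prod.exists,
    uncurry_apply_pair, eq_comm (a := m)]

theorem exists_pos_of_zadehExtension_pos {f : X → Z} {u : X → ℝ} {z : Z}
    (hz : 0 < zadehExtension f u z) : ∃ a, f a = z ∧ 0 < u a := by
  contrapose! hz
  exact Real.sSup_nonpos (forall_mem_image.2 hz)

theorem preimage_Ici_min_eq_prod {L : Type*} [LinearOrder L] (x : X → L) (y : Y → L) (c : L) :
    (fun p : X × Y => min (x p.1) (y p.2)) ⁻¹' Ici c = (x ⁻¹' Ici c) ×ˢ (y ⁻¹' Ici c) := by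
  ext p
  exact le_min_iff

variable [TopologicalSpace X] [T2Space X]

theorem isGreatest_zadehExtension {f : X → Z} {u : X → ℝ} {a : X}
    (hf : IsClosed (f ⁻¹' {f a})) (hu : ∀ c, 0 < c → IsCompact (u ⁻¹' Ici c)) (ha : 0 < u a) :
    IsGreatest (u '' (f ⁻¹' {f a})) (zadehExtension f u (f a)) := by
  obtain ⟨p, hp, hmax⟩ := exists_isMaxOn_of_isCompact_preimage_Ici hf (mem_singleton (f a))
    fun d hd => hu d (ha.trans_le hd)
  have hgreatest : IsGreatest (u '' (f ⁻¹' {f a})) (u p) :=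
    ⟨mem_image_of_mem u hp, forall_mem_image.2 hmax⟩
  rwa [zadehExtension, hgreatest.csSup_eq]

theorem zadehExtension_preimage_Ici {f : X → Z} {u : X → ℝ} (hf : ∀ z, IsClosed (f ⁻¹' {z}))
    (hu : ∀ c, 0 < c → IsCompact (u ⁻¹' Ici c)) {α : ℝ} (hα : 0 < α) :
    zadehExtension f u ⁻¹' Ici α = f '' (u ⁻¹' Ici α) := by
  apply Subset.antisymm
  · intro z hz
    obtain ⟨a, rfl, ha⟩ := exists_pos_of_zadehExtension_pos (hα.trans_le hz)
    obtain ⟨p, hp, hup⟩ := (isGreatest_zadehExtension (hf _) hu ha).1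
    exact ⟨p, hz.trans_eq hup.symm, hp⟩
  · rintro _ ⟨a, ha, rfl⟩
    exact ha.trans <| (isGreatest_zadehExtension (hf _) hu (hα.trans_le ha)).2
      (mem_image_of_mem u rfl)

theorem alpha_cut_of_zadeh_extension_general [TopologicalSpace Y] [T2Space Y] {f : X → Y → Z}
    (hf : ∀ z, IsClosed (uncurry f ⁻¹' {z})) {x : X → ℝ} {y : Y → ℝ}
    (hx : ∀ c, 0 < c → IsCompact (x ⁻¹' Ici c)) (hy : ∀ c, 0 < c → IsCompact (y ⁻¹' Ici c))
    {α : ℝ} (hα : 0 < α) :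
    zadehExtension (uncurry f) (fun p => min (x p.1) (y p.2)) ⁻¹' Ici α =
      image2 f (x ⁻¹' Ici α) (y ⁻¹' Ici α) := by
  have hxy : ∀ c, 0 < c → IsCompact ((fun p : X × Y => min (x p.1) (y p.2)) ⁻¹' Ici c) :=
    fun c hc => preimage_Ici_min_eq_prod x y c ▸ (hx c hc).prod (hy c hc)
  rw [zadehExtension_preimage_Ici hf hxy hα, preimage_Ici_min_eq_prod, image_uncurry_prod]

end ZadehExtension

theorem alpha_cut_of_zadeh_extension
    (f : ℝ → ℝ → ℝ) (hf : Continuous fun p : ℝ × ℝ => f p.1 p.2)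
    (x y : ℝ → ℝ)
    (hx : ∀ t, x t ∈ Icc (0:ℝ) 1) (hy : ∀ t, y t ∈ Icc (0:ℝ) 1)
    (hxcut : ∀ α ∈ Ioc (0:ℝ) 1, (cut x α).Nonempty ∧ IsCompact (cut x α))
    (hycut : ∀ α ∈ Ioc (0:ℝ) 1, (cut y α).Nonempty ∧ IsCompact (cut y α)) :
    ∀ α ∈ Ioc (0:ℝ) 1,
      cut (zadeh2 f x y) α = Set.image2 f (cut x α) (cut y α) := by
  intro α hα
  rw [zadeh2_eq_zadehExtension]
  exact alpha_cut_of_zadeh_extension_general (fun _ => isClosed_singleton.preimage hf)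
    (fun _ => isCompact_preimage_Ici_of_forall_le (fun t => (hx t).2) fun c hc => (hxcut c hc).2)
    (fun _ => isCompact_preimage_Ici_of_forall_le (fun t => (hy t).2) fun c hc => (hycut c hc).2)
    hα.1
end

section
/- Let T be a tree-structured fault tree over a finite index set I of basic events in which every basic event index occurs at most once, and let p : I → [0,1] be (crisp) failure probabilities. Define the structure function S_T : 𝔹^I → 𝔹 recursively by S_{BE(i)}(f) = fᵢ, S_{AND(T₁,T₂)}(f) = S_{T₁}(f) ∧ S_{T₂}(f), S_{OR(T₁,T₂)}(f) = S_{T₁}(f) ∨ S_{T₂}(f). Then the cut-set sum equals the bottom-up value: Σ_{f ∈ 𝔹^I, S_T(f) = 1} Π_{i ∈ I} p(i)^{fᵢ} (1 − p(i))^{1 − fᵢ} = U_T(p), where U_T is defined recursively by U_{BE(i)}(p) = p(i), U_{AND(T₁,T₂)}(p) = U_{T₁}(p) · U_{T₂}(p), U_{OR(T₁,T₂)}(p) = 1 − (1 − U_{T₁}(p))(1 − U_{T₂}(p)). -/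
open Set

/-- Fault trees over an index set of basic events. -/
inductive FT (I : Type) : Type where
  | BE : I → FT I
  | AND : FT I → FT I → FT I
  | OR : FT I → FT I → FT I

/-- The list of basic event labels occurring in a fault tree. -/
def FT.leaves {I : Type} : FT I → List I
  | .BE i => [i]
  | .AND t₁ t₂ => t₁.leaves ++ t₂.leaves
  | .OR t₁ t₂ => t₁.leaves ++ t₂.leaves

/-- The structure function of a fault tree. -/
def structF {I : Type} : FT I → (I → Bool) → Bool
  | .BE i => fun f => f i
  | .AND t₁ t₂ => fun f => structF t₁ f && structF t₂ f
  | .OR t₁ t₂ => fun f => structF t₁ f || structF t₂ f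

/-- Crisp unreliability function of a fault tree, computed bottom-up. -/
def crispU {I : Type} : FT I → (I → ℝ) → ℝ
  | .BE i => fun p => p i
  | .AND t₁ t₂ => fun p => crispU t₁ p * crispU t₂ p
  | .OR t₁ t₂ => fun p => 1 - (1 - crispU t₁ p) * (1 - crispU t₂ p)

/-! The left-hand side is the expectation of the indicator of `S_T` when the basic events fail
independently with probabilities `p i`. Expectation is linear and multiplicative on functions of
disjoint sets of coordinates, and the two subtrees of a gate share no basic event. Hence the
expectation of `S_T` obeys the recursion defining `U_T`, with inclusion–exclusion at an OR gate.
-/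

section Piecewise

variable {ι M : Type*} {α : ι → Type*} (s : Set ι) [∀ i, Decidable (i ∈ s)]

theorem involutive_piecewise_swap :
    Function.Involutive fun z : (∀ i, α i) × (∀ i, α i) =>
      (s.piecewise z.1 z.2, s.piecewise z.2 z.1) := by
  rintro ⟨x, y⟩
  ext i <;> by_cases hi : i ∈ s <;> simp [hi]

theorem prod_piecewise_mul_prod_piecewise [Fintype ι] [CommMonoid M] (w : ∀ i, α i → M)
    (x y : ∀ i, α i) :
    (∏ i, w i (s.piecewise x y i)) * ∏ i, w i (s.piecewise y x i) =
      (∏ i, w i (x i)) * ∏ i, w i (y i) := by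
  rw [← Finset.prod_mul_distrib, ← Finset.prod_mul_distrib]
  refine Finset.prod_congr rfl fun i _ => ?_
  by_cases hi : i ∈ s <;> simp [hi, mul_comm]

end Piecewise

section ProductExpectation

variable {ι R : Type*} {α : ι → Type*} [Fintype ι] [DecidableEq ι] [∀ i, Fintype (α i)]
  [CommSemiring R]

/-- The sum of a function on `∀ i, α i` against the product of the weights `w i`: its expectation
under the product distribution when every `w i` has total mass `1`. -/
def productExpectation (w : ∀ i, α i → R) : ((∀ i, α i) → R) →ₗ[R] R :=
  Fintype.linearCombination R fun x => ∏ i, w i (x i)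

theorem productExpectation_apply (w : ∀ i, α i → R) (g : (∀ i, α i) → R) :
    productExpectation w g = ∑ x, g x * ∏ i, w i (x i) :=
  Fintype.linearCombination_apply R _ g

theorem productExpectation_prod (w g : ∀ i, α i → R) :
    productExpectation w (fun x => ∏ i, g i (x i)) = ∏ i, ∑ a, g i a * w i a := by
  simp only [productExpectation_apply, ← Finset.prod_mul_distrib, Fintype.prod_sum]

theorem productExpectation_one (w : ∀ i, α i → R) (hw : ∀ i, ∑ a, w i a = 1) :
    productExpectation w 1 = 1 := by
  simpa [hw, Pi.one_def] using productExpectation_prod w 1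

theorem productExpectation_eval (w : ∀ i, α i → R) (hw : ∀ i, ∑ a, w i a = 1) (j : ι)
    (g : α j → R) : productExpectation w (fun x => g (x j)) = ∑ a, g a * w j a := by
  have factor_eq_one (i : ι) (hi : i ≠ j) (a : α i) :
      Pi.mulSingle (M := fun i => α i → R) j g i a = 1 := by
    rw [Pi.mulSingle_eq_of_ne hi, Pi.one_apply]
  have eval_eq_prod (x : ∀ i, α i) :
      g (x j) = ∏ i, Pi.mulSingle (M := fun i => α i → R) j g i (x i) := by
    rw [Fintype.prod_eq_single j fun i hi => factor_eq_one i hi (x i), Pi.mulSingle_eq_same]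
  simp only [eval_eq_prod, productExpectation_prod]
  rw [Fintype.prod_eq_single j fun i hi => by simp only [factor_eq_one i hi, one_mul, hw],
    Pi.mulSingle_eq_same]

-- For independent `x` and `y`, exchanging their coordinates outside `s` preserves the joint weight
-- and turns `g x * h x` into `g x * h y`.
theorem productExpectation_mul_mul_one (w : ∀ i, α i → R) {s t : Set ι} (hst : Disjoint s t)
    {g h : (∀ i, α i) → R} (hg : DependsOn g s) (hh : DependsOn h t) :
    productExpectation w (g * h) * productExpectation w 1 =
      productExpectation w g * productExpectation w h := by
  classical
  simp only [productExpectation_apply, Fintype.sum_mul_sum, ← Fintype.sum_prod_type']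
  refine Fintype.sum_equiv (involutive_piecewise_swap s).toPerm _ _ ?_
  rintro ⟨x, y⟩
  have g_swap : g (s.piecewise x y) = g x := hg fun i hi => s.piecewise_eq_of_mem x y hi
  have h_swap : h (s.piecewise y x) = h x :=
    hh fun i hi => s.piecewise_eq_of_notMem y x (hst.notMem_of_mem_right hi)
  simp only [Function.Involutive.coe_toPerm, g_swap, h_swap, Pi.mul_apply, Pi.one_apply, one_mul]
  rw [mul_mul_mul_comm (g x), prod_piecewise_mul_prod_piecewise, mul_assoc]

theorem productExpectation_mul (w : ∀ i, α i → R) (hw : ∀ i, ∑ a, w i a = 1) {s t : Set ι}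
    (hst : Disjoint s t) {g h : (∀ i, α i) → R} (hg : DependsOn g s) (hh : DependsOn h t) :
    productExpectation w (g * h) = productExpectation w g * productExpectation w h := by
  rw [← productExpectation_mul_mul_one w hst hg hh, productExpectation_one w hw, mul_one]

end ProductExpectation

/-- The weight of state `b` of a coordinate `i` that is `true` with probability `p i`, written
`p i ^ b * (1 - p i) ^ (1 - b)` as in the cut-set sum. -/
def bernoulliWeight {ι R : Type*} [Ring R] (p : ι → R) (i : ι) (b : Bool) : R :=
  p i ^ (if b then 1 else 0) * (1 - p i) ^ (if b then 0 else 1)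

theorem sum_bernoulliWeight {ι R : Type*} [Ring R] (p : ι → R) (i : ι) :
    ∑ b, bernoulliWeight p i b = 1 := by
  simp [bernoulliWeight]

section FaultTree

variable {I : Type}

theorem dependsOn_structF (T : FT I) : DependsOn (structF T) {i | i ∈ T.leaves} := by
  intro f g hfg
  induction T with
  | BE i => exact hfg i (List.mem_singleton_self i)
  | AND T₁ T₂ ih₁ ih₂ =>
    exact congrArg₂ and (ih₁ fun i hi => hfg i (List.mem_append_left _ hi))
      (ih₂ fun i hi => hfg i (List.mem_append_right _ hi))
  | OR T₁ T₂ ih₁ ih₂ =>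
    exact congrArg₂ or (ih₁ fun i hi => hfg i (List.mem_append_left _ hi))
      (ih₂ fun i hi => hfg i (List.mem_append_right _ hi))

/-- The structure function as a `0`/`1`-valued function in `R`, so that its expectation is the
total weight of the cut sets. -/
def structIndicator (R : Type*) [Zero R] [One R] (T : FT I) (f : I → Bool) : R :=
  if structF T f = true then 1 else 0

theorem dependsOn_structIndicator (R : Type*) [Zero R] [One R] (T : FT I) :
    DependsOn (structIndicator R T) {i | i ∈ T.leaves} := by
  intro f g hfg
  rw [structIndicator, structIndicator, dependsOn_structF T hfg]

theorem structIndicator_AND (R : Type*) [MulZeroOneClass R] (T₁ T₂ : FT I) :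
    structIndicator R (.AND T₁ T₂) = structIndicator R T₁ * structIndicator R T₂ := by
  funext f
  cases h₁ : structF T₁ f <;> cases h₂ : structF T₂ f <;> simp [structIndicator, structF, h₁, h₂]

theorem structIndicator_OR (R : Type*) [Ring R] (T₁ T₂ : FT I) :
    structIndicator R (.OR T₁ T₂) =
      structIndicator R T₁ + structIndicator R T₂ -
        structIndicator R T₁ * structIndicator R T₂ := by
  funext f
  cases h₁ : structF T₁ f <;> cases h₂ : structF T₂ f <;> simp [structIndicator, structF, h₁, h₂]

variable [Fintype I] [DecidableEq I]

theorem productExpectation_structIndicator_BE {R : Type*} [CommRing R] (p : I → R) (i : I) :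
    productExpectation (bernoulliWeight p) (structIndicator R (.BE i)) = p i := by
  have expectation_eq_sum :=
    productExpectation_eval (bernoulliWeight p) (sum_bernoulliWeight p) i
      fun b => if b = true then 1 else 0
  exact expectation_eq_sum.trans (by simp [bernoulliWeight])

theorem productExpectation_structIndicator_mul {R : Type*} [CommRing R] (p : I → R)
    {T₁ T₂ : FT I} (h : T₁.leaves.Disjoint T₂.leaves) :
    productExpectation (bernoulliWeight p) (structIndicator R T₁ * structIndicator R T₂) =
      productExpectation (bernoulliWeight p) (structIndicator R T₁) *
        productExpectation (bernoulliWeight p) (structIndicator R T₂) :=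
  productExpectation_mul _ (sum_bernoulliWeight p) (Set.disjoint_left.2 h)
    (dependsOn_structIndicator R T₁) (dependsOn_structIndicator R T₂)

theorem productExpectation_structIndicator (T : FT I) (hT : T.leaves.Nodup) (p : I → ℝ) :
    productExpectation (bernoulliWeight p) (structIndicator ℝ T) = crispU T p := by
  induction T with
  | BE i => exact productExpectation_structIndicator_BE p i
  | AND T₁ T₂ ih₁ ih₂ =>
    obtain ⟨hT₁, hT₂, hdisj⟩ := List.nodup_append'.1 hT
    rw [structIndicator_AND, productExpectation_structIndicator_mul p hdisj, ih₁ hT₁, ih₂ hT₂,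
      crispU]
  | OR T₁ T₂ ih₁ ih₂ =>
    obtain ⟨hT₁, hT₂, hdisj⟩ := List.nodup_append'.1 hT
    rw [structIndicator_OR, map_sub, map_add, productExpectation_structIndicator_mul p hdisj,
      ih₁ hT₁, ih₂ hT₂, crispU]
    ring

theorem cutset_sum_eq_bottomup_general (T : FT I) (hT : T.leaves.Nodup) (p : I → ℝ) :
    ∑ f ∈ Finset.univ.filter (fun f : I → Bool => structF T f = true),
      ∏ i, (p i) ^ (if f i then 1 else 0) * (1 - p i) ^ (if f i then 0 else 1)
      = crispU T p := by
  rw [← productExpectation_structIndicator T hT p, productExpectation_apply]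
  simp only [structIndicator, bernoulliWeight, ite_mul, one_mul, zero_mul, Finset.sum_filter]

end FaultTree

theorem cutset_sum_eq_bottomup {I : Type} [Fintype I] [DecidableEq I]
    (T : FT I) (hT : T.leaves.Nodup)
    (p : I → ℝ) (hp : ∀ i, p i ∈ Icc (0:ℝ) 1) :
    ∑ f ∈ Finset.univ.filter (fun f : I → Bool => structF T f = true),
      ∏ i, (p i) ^ (if f i then 1 else 0) * (1 - p i) ^ (if f i then 0 else 1)
      = crispU T p :=
  cutset_sum_eq_bottomup_general T hT p
end
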